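/- Let a_1, …, a_r : [0,2π)^ν → ℂ be bounded measurable functions and let T_n(a_k) denote their Toeplitz compressions to the cube {0,…,n−1}^ν. Then for any polynomials f_1, …, f_r (with complex coefficients, applied to matrices in the usual way), lim_{n→∞} (1/n^ν) Tr[ f_1(T_n(a_1)) · … · f_r(T_n(a_r)) ] = (2π)^{−ν} ∫_{[0,2π)^ν} f_1(a_1(x)) · … · f_r(a_r(x)) dx. -/

import Mathlib

open MeasureTheory Filter Matrix Set

noncomputable section

/-- The cube `[0, 2π)^ν`. -/
def cube (ν : ℕ) : Set (Fin ν → ℝ) := Set.univ.pi fun _ => Set.Ico 0 (2 * Real.pi)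

/-- Fourier coefficient of `a : [0,2π)^ν → ℂ` at `j ∈ ℤ^ν`:
`â(j) = (2π)^{−ν} ∫_{[0,2π)^ν} a(x) e^{−i j·x} dx`. -/
def fourierCoefficient {ν : ℕ} (a : (Fin ν → ℝ) → ℂ) (j : Fin ν → ℤ) : ℂ :=
  (((2 * Real.pi) ^ ν : ℝ) : ℂ)⁻¹ *
    ∫ x in cube ν, a x * Complex.exp (-Complex.I * ∑ m, (j m : ℂ) * (x m : ℂ))

/-- The Toeplitz compression `T_n(a)`: the `n^ν × n^ν` matrix indexed by multi-indices
`j, k ∈ {0,…,n−1}^ν` with entries `â(j−k)`. -/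
def toeplitz {ν : ℕ} (n : ℕ) (a : (Fin ν → ℝ) → ℂ) :
    Matrix (Fin ν → Fin n) (Fin ν → Fin n) ℂ :=
  Matrix.of fun j k => fourierCoefficient a fun m => (j m : ℤ) - (k m : ℤ)

set_option linter.unusedSectionVars false
set_option linter.unusedSimpArgs false

/-- squared Frobenius norm -/
def frobSq {ι : Type*} [Fintype ι] (A : Matrix ι ι ℂ) : ℝ := ∑ k, ∑ j, ‖A j k‖ ^ 2

section frob
open scoped Matrix.Norms.L2Operator
variable {ι : Type*} [Fintype ι] [DecidableEq ι]

lemma frobSq_nonneg (A : Matrix ι ι ℂ) : 0 ≤ frobSq A := by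
  unfold frobSq; positivity

lemma frobSq_add_le (A B : Matrix ι ι ℂ) : frobSq (A + B) ≤ 2 * (frobSq A + frobSq B) := by
  unfold frobSq
  simp only [← Finset.sum_add_distrib, Finset.mul_sum]
  refine Finset.sum_le_sum fun k _ => Finset.sum_le_sum fun j _ => ?_
  have h := norm_add_le (A j k) (B j k)
  have h0 := norm_nonneg (A j k + B j k)
  rw [Matrix.add_apply]
  nlinarith [sq_nonneg (‖A j k‖ - ‖B j k‖)]

lemma frobSq_smul (c : ℂ) (A : Matrix ι ι ℂ) : frobSq (c • A) = ‖c‖ ^ 2 * frobSq A := by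
  unfold frobSq
  simp only [Matrix.smul_apply, smul_eq_mul, norm_mul, mul_pow, Finset.mul_sum]

lemma frobSq_conjTranspose (A : Matrix ι ι ℂ) : frobSq Aᴴ = frobSq A := by
  unfold frobSq
  rw [Finset.sum_comm]
  simp [Matrix.conjTranspose_apply]

lemma frobSq_mul_le (A B : Matrix ι ι ℂ) : frobSq (A * B) ≤ ‖A‖ ^ 2 * frobSq B := by
  unfold frobSq
  rw [Finset.mul_sum]
  refine Finset.sum_le_sum fun k _ => ?_
  have h := A.l2_opNorm_mulVec (WithLp.toLp 2 (fun j => B j k))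
  have h2 := pow_le_pow_left₀ (norm_nonneg _) h 2
  rw [mul_pow, EuclideanSpace.norm_sq_eq, EuclideanSpace.norm_sq_eq] at h2
  exact h2

lemma frobSq_mul_le' (A B : Matrix ι ι ℂ) : frobSq (A * B) ≤ frobSq A * ‖B‖ ^ 2 := by
  rw [← frobSq_conjTranspose, Matrix.conjTranspose_mul]
  refine (frobSq_mul_le _ _).trans ?_
  rw [frobSq_conjTranspose, Matrix.l2_opNorm_conjTranspose, mul_comm]

lemma norm_trace_sq_le (A : Matrix ι ι ℂ) :
    ‖A.trace‖ ^ 2 ≤ Fintype.card ι * frobSq A := by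
  have h1 : ‖A.trace‖ ≤ ∑ i, ‖A i i‖ := norm_sum_le _ _
  have h2 : (∑ i, ‖A i i‖) ^ 2 ≤ Fintype.card ι * ∑ i, ‖A i i‖ ^ 2 := by
    simpa using sq_sum_le_card_mul_sum_sq (s := (Finset.univ : Finset ι)) (f := fun i => ‖A i i‖)
  refine (pow_le_pow_left₀ (norm_nonneg _) h1 2).trans (h2.trans ?_)
  refine mul_le_mul_of_nonneg_left ?_ (by positivity)
  unfold frobSq
  exact Finset.sum_le_sum fun k _ =>
    Finset.single_le_sum (f := fun j => ‖A j k‖ ^ 2) (fun _ _ => by positivity) (Finset.mem_univ k)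

variable {H : Type*} [NormedAddCommGroup H] [InnerProductSpace ℂ H]

/-- matrix of an operator in finite orthonormal family -/
def compr (e : ι → H) (M : H →L[ℂ] H) : Matrix ι ι ℂ := Matrix.of fun j k => inner ℂ (e j) (M (e k))

lemma bessel_fin {e : ι → H} (he : Orthonormal ℂ e) (x : H) :
    ∑ j, ‖inner ℂ (e j) x‖ ^ 2 ≤ ‖x‖ ^ 2 := he.sum_inner_products_le x

lemma norm_sum_sq_on {e : ι → H} (he : Orthonormal ℂ e) (v : ι → ℂ) :
    ‖∑ k, v k • e k‖ ^ 2 = ∑ k, ‖v k‖ ^ 2 := by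
  have := he.inner_sum (fun k => v k) (fun k => v k) Finset.univ
  rw [inner_self_eq_norm_sq_to_K] at this
  have h2 : ((‖∑ k, v k • e k‖ ^ 2 : ℝ) : ℂ) = ((∑ k, ‖v k‖ ^ 2 : ℝ) : ℂ) := by
    push_cast
    refine (this.trans ?_)
    refine Finset.sum_congr rfl fun k _ => ?_
    rw [Complex.conj_mul']
  exact_mod_cast h2

lemma compr_norm_le {e : ι → H} (he : Orthonormal ℂ e) (M : H →L[ℂ] H) : ‖compr e M‖ ≤ ‖M‖ := by
  rw [Matrix.cstar_norm_def]
  refine ContinuousLinearMap.opNorm_le_bound _ (norm_nonneg _) fun v => ?_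
  refine (sq_le_sq₀ (norm_nonneg _) (by positivity)).1 ?_
  rw [EuclideanSpace.norm_sq_eq]
  have hv : ‖v‖ ^ 2 = ‖∑ k, v k • e k‖ ^ 2 := by
    rw [EuclideanSpace.norm_sq_eq, norm_sum_sq_on he]
  rw [mul_pow, hv, ← mul_pow]
  refine le_trans (le_of_eq ?_) ((bessel_fin he (M (∑ k, v k • e k))).trans
    (pow_le_pow_left₀ (norm_nonneg _) (M.le_opNorm _) 2))
  refine Finset.sum_congr rfl fun j _ => ?_
  congr 2
  rw [Matrix.ofLp_toEuclideanCLM]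
  simp [Matrix.mulVec, dotProduct, compr, inner_sum, inner_smul_right, mul_comm]

lemma compr_defect {e : ι → H} (he : Orthonormal ℂ e) (M N : H →L[ℂ] H) :
    frobSq (compr e (M ∘L N) - compr e M * compr e N) ≤
      ‖M‖ ^ 2 * ∑ k, (‖N (e k)‖ ^ 2 - ∑ l, ‖inner ℂ (e l) (N (e k))‖ ^ 2) := by
  unfold frobSq
  rw [Finset.mul_sum]
  refine Finset.sum_le_sum fun k _ => ?_
  set g := N (e k) - ∑ l, inner ℂ (e l) (N (e k)) • e l with hg
  have hgn : ‖g‖ ^ 2 = ‖N (e k)‖ ^ 2 - ∑ l, ‖inner ℂ (e l) (N (e k))‖ ^ 2 := by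
    set y := ∑ l, inner ℂ (e l) (N (e k)) • e l with hy
    have horth : inner ℂ g y = 0 := by
      rw [hy, inner_sum]
      refine Finset.sum_eq_zero fun l _ => ?_
      rw [inner_smul_right, hg, inner_sub_left, hy, he.inner_left_fintype, inner_conj_symm,
        sub_self, mul_zero]
    have hx : N (e k) = g + y := by simp [hg]
    have hp := norm_add_sq_eq_norm_sq_add_norm_sq_of_inner_eq_zero g y horth
    rw [← hx] at hp
    have hyn := norm_sum_sq_on he (fun l => inner ℂ (e l) (N (e k)))
    rw [← hy] at hyn
    nlinarith [hp, hyn]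
  rw [← hgn, ← mul_pow]
  refine le_trans (le_of_eq ?_) ((bessel_fin he (M g)).trans
    (pow_le_pow_left₀ (norm_nonneg _) (M.le_opNorm _) 2))
  refine Finset.sum_congr rfl fun j _ => ?_
  congr 2
  simp [hg, compr, Matrix.mul_apply, inner_sub_right, inner_sum, inner_smul_right, mul_comm]

end frob

lemma avg_tendsto {ν : ℕ} (c : (Fin ν → ℤ) → ℝ) (hc : ∀ m, 0 ≤ c m) (S : ℝ) (hS : HasSum c S) :
    Tendsto (fun n : ℕ => ((n : ℝ) ^ ν)⁻¹ * ∑ k : Fin ν → Fin n,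
      (S - ∑ l : Fin ν → Fin n, c (fun i => (l i : ℤ) - (k i : ℤ)))) atTop (nhds 0) := by
  have hE0 : ∀ n : ℕ, ∀ k : Fin ν → Fin n,
      0 ≤ S - ∑ l : Fin ν → Fin n, c (fun i => (l i : ℤ) - (k i : ℤ)) := by
    intro n k
    have hinj : Function.Injective (fun (l : Fin ν → Fin n) (i : Fin ν) => (l i : ℤ) - (k i : ℤ)) := by
      intro l l' h
      funext i
      have := congrFun h i
      simp only [sub_left_inj, Nat.cast_inj] at this
      exact Fin.ext this
    have h1 := sum_le_hasSum (Finset.univ.map ⟨_, hinj⟩) (fun m _ => hc m) hS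
    rw [Finset.sum_map] at h1
    exact sub_nonneg.2 h1
  have hS0 : 0 ≤ S := hS.nonneg hc
  rw [Metric.tendsto_atTop']
  intro ε hε
  obtain ⟨F, hF⟩ : ∃ F : Finset (Fin ν → ℤ), S - ε / 2 < ∑ m ∈ F, c m :=
    ((tendsto_order.1 hS).1 (S - ε / 2) (by linarith)).exists
  obtain ⟨R, hR⟩ : ∃ R : ℕ, ∀ m ∈ F, ∀ i, |m i| ≤ R := by
    refine ⟨∑ m ∈ F, ∑ i, (m i).natAbs, fun m hm i => ?_⟩
    have h1 : (m i).natAbs ≤ ∑ i, (m i).natAbs :=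
      Finset.single_le_sum (f := fun i => (m i).natAbs) (fun _ _ => Nat.zero_le _) (Finset.mem_univ i)
    have h2 : ∑ i, (m i).natAbs ≤ ∑ m ∈ F, ∑ i, (m i).natAbs :=
      Finset.single_le_sum (f := fun m : Fin ν → ℤ => ∑ i, (m i).natAbs)
        (fun _ _ => Nat.zero_le _) hm
    rw [Int.abs_eq_natAbs]
    exact_mod_cast h1.trans h2
  have hlim : Tendsto (fun n : ℕ => S * (1 - (((n : ℝ) - 2 * R) / n) ^ ν)) atTop (nhds 0) := by
    have h1 : Tendsto (fun n : ℕ => ((n : ℝ) - 2 * R) / n) atTop (nhds 1) := by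
      have h2 : Tendsto (fun n : ℕ => 1 - (2 * R : ℝ) / n) atTop (nhds (1 - 0)) :=
        tendsto_const_nhds.sub (tendsto_const_div_atTop_nhds_zero_nat _)
      rw [sub_zero] at h2
      refine h2.congr' ?_
      filter_upwards [eventually_gt_atTop 0] with n hn
      have : (n : ℝ) ≠ 0 := by positivity
      field_simp
    have h3 := ((h1.pow ν).const_sub 1).const_mul S
    simpa using h3
  obtain ⟨n0, hn0⟩ := eventually_atTop.1 ((tendsto_order.1 hlim).2 (ε / 2) (by linarith))
  refine ⟨max n0 (2 * R + 1), fun n hn => ?_⟩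
  have hnn0 : n0 ≤ n := (le_max_left _ _).trans hn.le
  have hnR : 2 * R + 1 ≤ n := (le_max_right _ _).trans hn.le
  have hnpos : (0 : ℝ) < n := by
    have : 0 < n := by omega
    exact_mod_cast this
  have hpow : (0 : ℝ) < (n : ℝ) ^ ν := by positivity
  rw [Real.dist_eq, sub_zero, abs_of_nonneg
    (mul_nonneg (by positivity) (Finset.sum_nonneg fun k _ => hE0 n k))]
  set I : Finset (Fin ν → Fin n) := Fintype.piFinset fun _ =>
    (Finset.univ.filter fun x : Fin n => R ≤ (x : ℕ) ∧ (x : ℕ) + R < n) with hI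
  have hcard1 : (Finset.univ.filter fun x : Fin n => R ≤ (x : ℕ) ∧ (x : ℕ) + R < n).card
      = n - 2 * R := by
    have : (Finset.univ.filter fun x : Fin n => R ≤ (x : ℕ) ∧ (x : ℕ) + R < n).map Fin.valEmbedding
        = Finset.Ico R (n - R) := by
      ext x
      simp only [Finset.mem_map, Finset.mem_filter, Finset.mem_univ, true_and, Finset.mem_Ico,
        Fin.valEmbedding_apply]
      constructor
      · rintro ⟨y, hy, rfl⟩
        omega
      · intro hx
        exact ⟨⟨x, by omega⟩, by simp; omega, rfl⟩
    rw [← Finset.card_map Fin.valEmbedding, this, Nat.card_Ico]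
    omega
  have hcard : (I.card : ℝ) = ((n : ℝ) - 2 * R) ^ ν := by
    rw [hI, Fintype.card_piFinset]
    simp only [hcard1, Finset.prod_const, Finset.card_univ, Fintype.card_fin]
    push_cast [Nat.cast_sub (show 2 * R ≤ n by omega)]
    rfl
  have hb : ∀ k : Fin ν → Fin n, S - ∑ l : Fin ν → Fin n, c (fun i => (l i : ℤ) - (k i : ℤ)) ≤
      ε / 2 + (S - if k ∈ I then S else 0) := by
    intro k
    have hpos : 0 ≤ ∑ l : Fin ν → Fin n, c (fun i => (l i : ℤ) - (k i : ℤ)) :=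
      Finset.sum_nonneg fun _ _ => hc _
    split_ifs with hk
    · have hk' : ∀ i, R ≤ (k i : ℕ) ∧ (k i : ℕ) + R < n := by
        simpa [hI, Fintype.mem_piFinset] using hk
      have hsub : ∑ m ∈ F, c m ≤ ∑ l : Fin ν → Fin n, c (fun i => (l i : ℤ) - (k i : ℤ)) := by
        have hb1 : ∀ m ∈ F, ∀ i, 0 ≤ m i + (k i : ℤ) ∧ m i + (k i : ℤ) < n := by
          intro m hm i
          have h1 := abs_le.1 (hR m hm i)
          have h2 := hk' i
          constructor <;> omega
        have hex : ∀ m ∈ F, ∃ l : Fin ν → Fin n, (fun i => (l i : ℤ) - (k i : ℤ)) = m := by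
          intro m hm
          refine ⟨fun i => ⟨(m i + (k i : ℤ)).toNat, ?_⟩, ?_⟩
          · have := hb1 m hm i; omega
          · funext i
            have := hb1 m hm i
            simp only
            omega
        have hsubset : F ⊆ Finset.univ.image
            (fun (l : Fin ν → Fin n) (i : Fin ν) => (l i : ℤ) - (k i : ℤ)) := by
          intro m hm
          obtain ⟨l, hl⟩ := hex m hm
          exact Finset.mem_image.2 ⟨l, Finset.mem_univ _, hl⟩
        refine (Finset.sum_le_sum_of_subset_of_nonneg hsubset fun _ _ _ => hc _).trans ?_
        exact Finset.sum_image_le_of_nonneg (fun _ _ => hc _)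
      linarith
    · linarith
  have hsum := Finset.sum_le_sum fun (k : Fin ν → Fin n) (_ : k ∈ Finset.univ) => hb k
  have hrhs : ∑ k : Fin ν → Fin n, (ε / 2 + (S - if k ∈ I then S else 0))
      = (n : ℝ) ^ ν * (ε / 2) + ((n : ℝ) ^ ν * S - ((n : ℝ) - 2 * R) ^ ν * S) := by
    rw [Finset.sum_add_distrib, Finset.sum_sub_distrib, Finset.sum_ite_mem]
    simp [hcard]
  rw [hrhs] at hsum
  have hlast := hn0 n hnn0
  calc _ ≤ ((n : ℝ) ^ ν)⁻¹ * ((n : ℝ) ^ ν * (ε / 2) +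
        ((n : ℝ) ^ ν * S - ((n : ℝ) - 2 * R) ^ ν * S)) :=
        mul_le_mul_of_nonneg_left hsum (by positivity)
    _ = ε / 2 + S * (1 - (((n : ℝ) - 2 * R) / n) ^ ν) := by
        rw [div_pow]; field_simp
    _ < ε := by linarith

section torus
open UnitAddTorus
open scoped Pointwise

local instance : MeasureSpace UnitAddCircle := ⟨AddCircle.haarAddCircle⟩
local instance : Measure.IsAddHaarMeasure (volume : Measure UnitAddCircle) :=
  inferInstanceAs (Measure.IsAddHaarMeasure AddCircle.haarAddCircle)
local instance : IsProbabilityMeasure (volume : Measure UnitAddCircle) :=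
  inferInstanceAs (IsProbabilityMeasure AddCircle.haarAddCircle)

variable {ν : ℕ}

/-- representative in the cube -/
def rep (t : UnitAddTorus (Fin ν)) : Fin ν → ℝ :=
  (2 * Real.pi) • fun i => ((AddCircle.equivIco 1 0 (t i) : ℝ))

lemma measurable_rep : Measurable (rep (ν := ν)) := by
  unfold rep
  refine measurable_pi_lambda _ fun i => ?_
  simp only [Pi.smul_apply, smul_eq_mul]
  refine Measurable.const_mul ?_ _
  exact measurable_subtype_coe.comp
    ((AddCircle.measurableEquivIco 1 0).measurable.comp (measurable_pi_apply i))

lemma integral_rep (G : (Fin ν → ℝ) → ℂ) :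
    ∫ t : UnitAddTorus (Fin ν), G (rep t) =
      (((2 * Real.pi) ^ ν : ℝ) : ℂ)⁻¹ * ∫ x in cube ν, G x := by
  rw [integral_preimage (fun t => G (rep t)) (fun _ => 0)]
  have hset : {x : Fin ν → ℝ | ∀ i, x i ∈ Ioc (0 : ℝ) (0 + 1)} =ᵐ[volume]
      (Set.univ.pi fun _ => Set.Ico (0 : ℝ) 1) := by
    have h1 : {x : Fin ν → ℝ | ∀ i, x i ∈ Ioc (0 : ℝ) (0 + 1)} =
        Set.univ.pi fun _ => Set.Ioc (0 : ℝ) 1 := by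
      ext x; simp [Set.mem_pi]
    rw [h1]
    exact (Measure.univ_pi_Ioc_ae_eq_Icc (f := fun _ : Fin ν => (0 : ℝ)) (g := fun _ => 1)).trans
      (Measure.univ_pi_Ico_ae_eq_Icc (f := fun _ : Fin ν => (0 : ℝ)) (g := fun _ => 1)).symm
  rw [setIntegral_congr_set hset]
  have h2 : ∫ x in (Set.univ.pi fun _ : Fin ν => Set.Ico (0 : ℝ) 1),
      G (rep fun i => (x i : UnitAddCircle)) =
      ∫ x in (Set.univ.pi fun _ : Fin ν => Set.Ico (0 : ℝ) 1), G ((2 * Real.pi) • x) := by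
    refine setIntegral_congr_fun (MeasurableSet.univ_pi fun _ => measurableSet_Ico) fun x hx => ?_
    show G _ = G _
    congr 1
    unfold rep
    congr 1
    funext i
    have hi := hx i (Set.mem_univ i)
    have := AddCircle.coe_equivIco_mk_apply (1 : ℝ) (x i)
    rw [div_one, mul_one, Int.fract_eq_self.2 hi] at this
    exact this
  rw [h2, Measure.setIntegral_comp_smul volume G _ (by positivity : (2 * Real.pi) ≠ 0)]
  have h3 : (2 * Real.pi) • (Set.univ.pi fun _ : Fin ν => Set.Ico (0 : ℝ) 1) = cube ν := by
    have hp : 0 < 2 * Real.pi := by positivity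
    ext x
    rw [Set.mem_smul_set_iff_inv_smul_mem₀ hp.ne']
    simp only [cube, Set.mem_pi, Set.mem_univ, forall_true_left, Set.mem_Ico, Pi.smul_apply,
      smul_eq_mul]
    refine forall_congr' fun i => ?_
    rw [inv_mul_lt_iff₀ hp, mul_one, mul_nonneg_iff_of_pos_left (inv_pos.2 hp)]
  rw [h3, abs_of_nonneg (by positivity), Complex.real_smul]
  simp

/-- bounded measurable symbols -/
def BSym (a : (Fin ν → ℝ) → ℂ) : Prop := Measurable a ∧ ∃ C : ℝ, ∀ x, ‖a x‖ ≤ C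

lemma BSym.memLp {a : (Fin ν → ℝ) → ℂ} (ha : BSym a) :
    MemLp (fun t : UnitAddTorus (Fin ν) => a (rep t)) ⊤ volume := by
  obtain ⟨hm, C, hC⟩ := ha
  exact memLp_top_of_bound (hm.comp measurable_rep).aestronglyMeasurable C
    (Eventually.of_forall fun t => hC _)

/-- the Hilbert space -/
abbrev HH (ν : ℕ) := Lp ℂ 2 (volume : Measure (UnitAddTorus (Fin ν)))

/-- multiplication operator -/
def mulOp {a : (Fin ν → ℝ) → ℂ} (ha : BSym a) : HH ν →L[ℂ] HH ν :=
  (ContinuousLinearMap.mul ℂ ℂ).holderL volume ⊤ 2 2 ha.memLp.toLp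

lemma mulOp_coe {a : (Fin ν → ℝ) → ℂ} (ha : BSym a) (f : HH ν) :
    mulOp ha f =ᵐ[volume] fun t => a (rep t) * f t := by
  have h1 := (ContinuousLinearMap.mul ℂ ℂ).coeFn_holder (r := 2) ha.memLp.toLp f
  have h2 := ha.memLp.coeFn_toLp
  filter_upwards [h1, h2] with t h1 h2
  rw [← h2]
  exact h1

lemma BSym.mul {a b : (Fin ν → ℝ) → ℂ} (ha : BSym a) (hb : BSym b) : BSym (a * b) := by
  obtain ⟨hm, C, hC⟩ := ha
  obtain ⟨hm', C', hC'⟩ := hb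
  refine ⟨hm.mul hm', C * C', fun x => ?_⟩
  rw [Pi.mul_apply, norm_mul]
  exact mul_le_mul (hC x) (hC' x) (norm_nonneg _) ((norm_nonneg _).trans (hC x))

lemma mulOp_mul {a b : (Fin ν → ℝ) → ℂ} (ha : BSym a) (hb : BSym b) :
    mulOp (ha.mul hb) = mulOp ha ∘L mulOp hb := by
  ext1 f
  refine Lp.ext ?_
  rw [ContinuousLinearMap.comp_apply]
  filter_upwards [mulOp_coe (ha.mul hb) f, mulOp_coe hb f, mulOp_coe ha (mulOp hb f)]
    with t h1 h2 h3
  rw [h1, h3, h2, Pi.mul_apply, mul_assoc]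

lemma mFourier_rep (n : Fin ν → ℤ) (t : UnitAddTorus (Fin ν)) :
    mFourier n t = Complex.exp (Complex.I * ∑ m, (n m : ℂ) * (rep t m : ℂ)) := by
  unfold mFourier
  rw [ContinuousMap.coe_mk, Finset.mul_sum, Complex.exp_sum]
  refine Finset.prod_congr rfl fun i _ => ?_
  have : t i = ((AddCircle.equivIco 1 0 (t i) : ℝ) : UnitAddCircle) :=
    (AddCircle.coe_equivIco (p := (1 : ℝ)) (a := 0)).symm
  conv_lhs => rw [this]
  rw [fourier_coe_apply]
  congr 1
  simp [rep]
  ring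

lemma inner_mulOp {a : (Fin ν → ℝ) → ℂ} (ha : BSym a) (j k : Fin ν → ℤ) :
    inner ℂ (mFourierLp 2 j : HH ν) (mulOp ha (mFourierLp 2 k)) =
      fourierCoefficient a (fun m => j m - k m) := by
  rw [L2.inner_def, fourierCoefficient, ← integral_rep]
  refine integral_congr_ae ?_
  filter_upwards [mulOp_coe ha (mFourierLp 2 k), coeFn_mFourierLp 2 k, coeFn_mFourierLp 2 j]
    with t h1 h2 h3
  rw [h1, h2, h3, RCLike.inner_apply, ← mFourier_neg, mul_assoc, ← mFourier_add, mFourier_rep]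
  congr 2
  rw [neg_mul, ← mul_neg, ← Finset.sum_neg_distrib]
  congr 1
  refine Finset.sum_congr rfl fun i _ => ?_
  simp
  ring

lemma parseval_mulOp {a : (Fin ν → ℝ) → ℂ} (ha : BSym a) (k : Fin ν → ℤ) :
    HasSum (fun m => ‖fourierCoefficient a m‖ ^ 2) (‖mulOp ha (mFourierLp 2 k)‖ ^ 2) := by
  have h := (mFourierBasis (d := Fin ν)).hasSum_inner_mul_inner
    (mulOp ha (mFourierLp 2 k)) (mulOp ha (mFourierLp 2 k))
  rw [inner_self_eq_norm_sq_to_K] at h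
  have h2 : HasSum (fun j : Fin ν → ℤ => ‖fourierCoefficient a (fun m => j m - k m)‖ ^ 2)
      (‖mulOp ha (mFourierLp 2 k)‖ ^ 2) := by
    rw [← Complex.hasSum_ofReal]
    convert! h using 1
    · funext j
      rw [coe_mFourierBasis, ← inner_conj_symm, inner_mulOp, Complex.conj_mul']
      push_cast; rfl
    · push_cast; rfl
  exact ((Equiv.subRight k).hasSum_iff (f := fun m => ‖fourierCoefficient a m‖ ^ 2)).1 h2


section good
open scoped Matrix.Norms.L2Operator

/-- finite part of the Fourier basis -/
def eN (ν n : ℕ) (k : Fin ν → Fin n) : HH ν := mFourierLp 2 (fun i => ((k i : ℕ) : ℤ))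

lemma eN_on (ν n : ℕ) : Orthonormal ℂ (eN ν n) := by
  have hinj : Function.Injective
      (fun (k : Fin ν → Fin n) (i : Fin ν) => ((k i : ℕ) : ℤ)) := by
    intro l l' h
    funext i
    have := congrFun h i
    simp only [Nat.cast_inj] at this
    exact Fin.ext this
  exact (orthonormal_mFourier (d := Fin ν)).comp _ hinj

lemma toeplitz_eq {a : (Fin ν → ℝ) → ℂ} (ha : BSym a) (n : ℕ) :
    toeplitz n a = compr (eN ν n) (mulOp ha) := by
  ext j k
  simp only [toeplitz, compr, Matrix.of_apply, eN]
  rw [inner_mulOp]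

lemma toeplitz_mul_tendsto {a b : (Fin ν → ℝ) → ℂ} (ha : BSym a) (hb : BSym b) :
    Tendsto (fun n : ℕ => ((n : ℝ) ^ ν)⁻¹ *
      frobSq (toeplitz n (a * b) - toeplitz n a * toeplitz n b)) atTop (nhds 0) := by
  obtain ⟨S, hS⟩ : ∃ S : ℝ, ∀ k, ‖mulOp hb (mFourierLp 2 k)‖ ^ 2 = S :=
    ⟨_, fun k => (parseval_mulOp hb k).unique (parseval_mulOp hb 0)⟩
  have hsum : HasSum (fun m => ‖fourierCoefficient b m‖ ^ 2) S := by
    rw [← hS 0]; exact parseval_mulOp hb 0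
  have h := (avg_tendsto (fun m => ‖fourierCoefficient b m‖ ^ 2)
    (fun m => sq_nonneg _) S hsum).const_mul (‖mulOp ha‖ ^ 2)
  rw [mul_zero] at h
  have hbound : ∀ n : ℕ, frobSq (toeplitz n (a * b) - toeplitz n a * toeplitz n b) ≤
      ‖mulOp ha‖ ^ 2 * ∑ k : Fin ν → Fin n, (S - ∑ l : Fin ν → Fin n,
        ‖fourierCoefficient b (fun i => ((l i : ℕ) : ℤ) - ((k i : ℕ) : ℤ))‖ ^ 2) := by
    intro n
    have h1 := compr_defect (eN_on ν n) (mulOp ha) (mulOp hb)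
    rw [← mulOp_mul ha hb, ← toeplitz_eq ha, ← toeplitz_eq hb, ← toeplitz_eq (ha.mul hb)] at h1
    have h2 : ∀ k, ‖mulOp hb (eN ν n k)‖ ^ 2 = S := fun k => hS _
    have h3 : ∀ k l, inner ℂ (eN ν n l) (mulOp hb (eN ν n k)) =
      fourierCoefficient b (fun i => ((l i : ℕ) : ℤ) - ((k i : ℕ) : ℤ)) :=
      fun k l => inner_mulOp hb _ _
    simp only [h2, h3] at h1
    exact h1
  refine squeeze_zero (fun n => mul_nonneg (by positivity) (frobSq_nonneg _)) (fun n => ?_) h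
  rw [mul_left_comm]
  exact mul_le_mul_of_nonneg_left (hbound n) (by positivity)

/-- matrix sequences asymptotically equal to Toeplitz sequences -/
def Good (A : ∀ n : ℕ, Matrix (Fin ν → Fin n) (Fin ν → Fin n) ℂ) (a : (Fin ν → ℝ) → ℂ) : Prop :=
  BSym a ∧ (∃ C : ℝ, ∀ n, ‖A n‖ ≤ C) ∧
    Tendsto (fun n : ℕ => ((n : ℝ) ^ ν)⁻¹ * frobSq (A n - toeplitz n a)) atTop (nhds 0)

lemma toeplitz_norm_le {a : (Fin ν → ℝ) → ℂ} (ha : BSym a) (n : ℕ) :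
    ‖toeplitz n a‖ ≤ ‖mulOp ha‖ := by
  rw [toeplitz_eq ha]; exact compr_norm_le (eN_on ν n) _

lemma Good.of {a : (Fin ν → ℝ) → ℂ} (ha : BSym a) : Good (fun n => toeplitz n a) a := by
  refine ⟨ha, ⟨_, toeplitz_norm_le ha⟩, ?_⟩
  simp [frobSq]

lemma BSym.add {a b : (Fin ν → ℝ) → ℂ} (ha : BSym a) (hb : BSym b) : BSym (a + b) := by
  obtain ⟨hm, C, hC⟩ := ha
  obtain ⟨hm', C', hC'⟩ := hb
  exact ⟨hm.add hm', C + C', fun x => (norm_add_le _ _).trans (add_le_add (hC x) (hC' x))⟩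

lemma BSym.const (c : ℂ) : BSym (fun _ : Fin ν → ℝ => c) :=
  ⟨measurable_const, ‖c‖, fun _ => le_rfl⟩

lemma mulOp_add {a b : (Fin ν → ℝ) → ℂ} (ha : BSym a) (hb : BSym b) :
    mulOp (ha.add hb) = mulOp ha + mulOp hb := by
  ext1 f
  refine Lp.ext ?_
  rw [_root_.add_apply]
  filter_upwards [mulOp_coe (ha.add hb) f, mulOp_coe hb f, mulOp_coe ha f,
    Lp.coeFn_add (mulOp ha f) (mulOp hb f)] with t h1 h2 h3 h4
  rw [h1, h4, Pi.add_apply, Pi.add_apply, h3, h2, add_mul]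

lemma mulOp_const (c : ℂ) :
    mulOp (BSym.const (ν := ν) c) = c • ContinuousLinearMap.id ℂ (HH ν) := by
  ext1 f
  refine Lp.ext ?_
  rw [_root_.smul_apply, ContinuousLinearMap.id_apply]
  filter_upwards [mulOp_coe (BSym.const (ν := ν) c) f, Lp.coeFn_smul c f] with t h1 h2
  rw [h1, h2, Pi.smul_apply, smul_eq_mul]

lemma toeplitz_add {a b : (Fin ν → ℝ) → ℂ} (ha : BSym a) (hb : BSym b) (n : ℕ) :
    toeplitz n (a + b) = toeplitz n a + toeplitz n b := by
  rw [toeplitz_eq ha, toeplitz_eq hb, toeplitz_eq (ha.add hb), mulOp_add ha hb]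
  ext j k
  simp [compr, inner_add_right]

lemma toeplitz_const (c : ℂ) (n : ℕ) :
    toeplitz n (fun _ : Fin ν → ℝ => c) = algebraMap ℂ _ c := by
  rw [toeplitz_eq (BSym.const c), mulOp_const]
  ext j k
  simp only [compr, Matrix.of_apply, _root_.smul_apply, ContinuousLinearMap.id_apply,
    inner_smul_right, orthonormal_iff_ite.1 (eN_on ν n) j k, Matrix.algebraMap_matrix_apply]
  simp

lemma Good.const (c : ℂ) :
    Good (fun n => algebraMap ℂ (Matrix (Fin ν → Fin n) (Fin ν → Fin n) ℂ) c) (fun _ => c) := by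
  have := Good.of (BSym.const (ν := ν) c)
  simpa only [toeplitz_const] using this

variable {A B : ∀ n : ℕ, Matrix (Fin ν → Fin n) (Fin ν → Fin n) ℂ} {a b : (Fin ν → ℝ) → ℂ}

lemma Good.add (hA : Good A a) (hB : Good B b) : Good (fun n => A n + B n) (a + b) := by
  obtain ⟨ha, ⟨C, hC⟩, hA⟩ := hA
  obtain ⟨hb, ⟨C', hC'⟩, hB⟩ := hB
  refine ⟨ha.add hb, ⟨C + C', fun n => (norm_add_le _ _).trans (add_le_add (hC n) (hC' n))⟩, ?_⟩
  have h := (hA.add hB).const_mul 2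
  rw [add_zero, mul_zero] at h
  refine squeeze_zero (fun n => mul_nonneg (by positivity) (frobSq_nonneg _)) (fun n => ?_) h
  rw [toeplitz_add ha hb, add_sub_add_comm, ← mul_add, mul_left_comm]
  exact mul_le_mul_of_nonneg_left (frobSq_add_le _ _) (by positivity)

lemma Good.mul (hA : Good A a) (hB : Good B b) : Good (fun n => A n * B n) (a * b) := by
  obtain ⟨ha, ⟨C, hC⟩, hA⟩ := hA
  obtain ⟨hb, ⟨C', hC'⟩, hB⟩ := hB
  refine ⟨ha.mul hb, ⟨C * C', fun n => (norm_mul_le _ _).trans (mul_le_mul (hC n) (hC' n)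
    (norm_nonneg _) ((norm_nonneg _).trans (hC n)))⟩, ?_⟩
  have h := (((hA.mul_const (C' ^ 2)).add (hB.const_mul (‖mulOp ha‖ ^ 2))).const_mul 2).add
    (toeplitz_mul_tendsto ha hb) |>.const_mul 2
  simp only [zero_mul, mul_zero, add_zero] at h
  refine squeeze_zero (fun n => mul_nonneg (by positivity) (frobSq_nonneg _)) (fun n => ?_) h
  set D := toeplitz n (a * b) - toeplitz n a * toeplitz n b with hD
  have e : A n * B n - toeplitz n (a * b) =
      ((A n - toeplitz n a) * B n + toeplitz n a * (B n - toeplitz n b)) + (-1 : ℂ) • D := by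
    rw [hD, neg_one_smul]; noncomm_ring
  have h1 := frobSq_add_le ((A n - toeplitz n a) * B n + toeplitz n a * (B n - toeplitz n b))
    ((-1 : ℂ) • D)
  have h2 := frobSq_add_le ((A n - toeplitz n a) * B n) (toeplitz n a * (B n - toeplitz n b))
  have h3 := frobSq_mul_le' (A n - toeplitz n a) (B n)
  have h4 := frobSq_mul_le (toeplitz n a) (B n - toeplitz n b)
  have h5 : ‖B n‖ ^ 2 ≤ C' ^ 2 := pow_le_pow_left₀ (norm_nonneg _) (hC' n) 2
  have h6 : ‖toeplitz n a‖ ^ 2 ≤ ‖mulOp ha‖ ^ 2 :=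
    pow_le_pow_left₀ (norm_nonneg _) (toeplitz_norm_le ha n) 2
  have h7 := mul_le_mul_of_nonneg_left h5 (frobSq_nonneg (A n - toeplitz n a))
  have h8 := mul_le_mul_of_nonneg_right h6 (frobSq_nonneg (B n - toeplitz n b))
  rw [frobSq_smul, norm_neg, norm_one, one_pow, one_mul] at h1
  rw [e]
  have h9 : frobSq (((A n - toeplitz n a) * B n + toeplitz n a * (B n - toeplitz n b))
      + (-1 : ℂ) • D) ≤ 2 * (2 * (frobSq (A n - toeplitz n a) * C' ^ 2 +
        ‖mulOp ha‖ ^ 2 * frobSq (B n - toeplitz n b)) + frobSq D) := by linarith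
  refine (mul_le_mul_of_nonneg_left h9 (by positivity)).trans (le_of_eq ?_)
  ring

lemma Good.pow (hA : Good A a) (m : ℕ) : Good (fun n => A n ^ m) (a ^ m) := by
  induction m with
  | zero => simpa using! Good.const (ν := ν) 1
  | succ m ih => simpa only [pow_succ] using ih.mul hA

lemma Good.aeval (hA : Good A a) (p : Polynomial ℂ) :
    Good (fun n => Polynomial.aeval (A n) p) (fun x => p.eval (a x)) := by
  induction p using Polynomial.induction_on' with
  | add p q hp hq =>
    have := hp.add hq
    simp only [map_add, Polynomial.eval_add]
    exact this
  | monomial m c =>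
    have := (Good.const c).mul (hA.pow m)
    simp only [Polynomial.aeval_monomial, Polynomial.eval_monomial]
    exact this

lemma Good.prod {r : ℕ} {A : Fin r → ∀ n : ℕ, Matrix (Fin ν → Fin n) (Fin ν → Fin n) ℂ}
    {a : Fin r → (Fin ν → ℝ) → ℂ} (h : ∀ k, Good (A k) (a k)) :
    Good (fun n => (List.ofFn fun k => A k n).prod) (fun x => ∏ k, a k x) := by
  induction r with
  | zero => simpa using! Good.const (ν := ν) 1
  | succ r ih =>
    have := (h 0).mul (ih (fun k => h k.succ))
    simp only [List.ofFn_succ, List.prod_cons, Fin.prod_univ_succ]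
    exact this

lemma Good.trace (hA : Good A a) :
    Tendsto (fun n : ℕ => ((n : ℂ) ^ ν)⁻¹ * (A n).trace) atTop
      (nhds (fourierCoefficient a 0)) := by
  obtain ⟨ha, -, hA⟩ := hA
  rw [tendsto_iff_norm_sub_tendsto_zero]
  have h := hA.sqrt
  rw [Real.sqrt_zero] at h
  refine squeeze_zero' (Eventually.of_forall fun n => norm_nonneg _) ?_ h
  filter_upwards [eventually_gt_atTop 0] with n hn
  have hn' : (n : ℂ) ^ ν ≠ 0 := pow_ne_zero _ (by exact_mod_cast hn.ne')
  have htr : (toeplitz n a).trace = (n : ℂ) ^ ν * fourierCoefficient a 0 := by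
    have : ∀ j : Fin ν → Fin n, toeplitz n a j j = fourierCoefficient a 0 := by
      intro j
      simp only [toeplitz, Matrix.of_apply, sub_self]
      rfl
    simp [Matrix.trace, this]
  have e : ((n : ℂ) ^ ν)⁻¹ * (A n).trace - fourierCoefficient a 0 =
      ((n : ℂ) ^ ν)⁻¹ * (A n - toeplitz n a).trace := by
    rw [Matrix.trace_sub, htr]; field_simp
  rw [e]
  refine Real.le_sqrt_of_sq_le ?_
  have h1 := norm_trace_sq_le (A n - toeplitz n a)
  have hc : (Fintype.card (Fin ν → Fin n) : ℝ) = (n : ℝ) ^ ν := by simp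
  rw [hc] at h1
  have hp : (0 : ℝ) < (n : ℝ) ^ ν := by positivity
  rw [norm_mul, mul_pow, norm_inv, norm_pow, Complex.norm_natCast]
  refine (mul_le_mul_of_nonneg_left h1 (by positivity)).trans (le_of_eq ?_)
  field_simp

end good

end torus

/-- **Szegő-type theorem, polynomial version.**  For bounded measurable
`a_1, …, a_r : [0,2π)^ν → ℂ` and polynomials `f_1, …, f_r`,
`lim_n (1/n^ν) Tr[f_1(T_n(a_1)) ⋯ f_r(T_n(a_r))]
  = (2π)^{−ν} ∫_{[0,2π)^ν} f_1(a_1(x)) ⋯ f_r(a_r(x)) dx`. -/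
theorem szego_polynomial {ν r : ℕ} (hν : 1 ≤ ν)
    (a : Fin r → (Fin ν → ℝ) → ℂ)
    (hmeas : ∀ k, Measurable (a k))
    (hbdd : ∀ k, ∃ C : ℝ, ∀ x, ‖a k x‖ ≤ C)
    (f : Fin r → Polynomial ℂ) :
    Tendsto
      (fun n : ℕ => ((n : ℂ) ^ ν)⁻¹ *
        Matrix.trace
          (List.ofFn fun k => Polynomial.aeval (toeplitz n (a k)) (f k)).prod)
      atTop
      (nhds ((((2 * Real.pi) ^ ν : ℝ) : ℂ)⁻¹ *
        ∫ x in cube ν, ∏ k, (f k).eval (a k x))) := by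
  have h := (Good.prod fun k => (Good.of (a := a k) ⟨hmeas k, hbdd k⟩).aeval (f k)).trace
  simpa [fourierCoefficient] using h

end
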